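/- There exists an absolute constant c > 0 with the following property. Let R be a finite valuation ring of order q^r in which 6 is a unit (i.e., the residue characteristic is neither 2 nor 3), and let A ⊆ R be a nonempty subset satisfying |A+A|^4 ≥ q^{3r−1}·|A|. Then max{|A+A|, |A^3 + A^3|} ≥ c·q^{r/10}·|A|^{9/10}. -/

import Mathlib

open Finset Pointwise

open IsLocalRing

/-!
Each `a ∈ A` gives, for all `b ∈ A` and all units `c ∈ A`, an incidence between the point
`(a + b, a³ + c³)` and the graph of the cubic `x ↦ (x - b)³ + c³`. A variance bound controls the
number of incidences by the number of agreements between two such cubics. When `b' - b` is a unit,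
completing the square turns an agreement into a square root in the residue field, and square roots
are counted by the quadratic character, whose double sums exhibit square-root cancellation; the
pairs with `b' ≡ b` modulo the maximal ideal are few. With `N = |R|`, this gives
`|A|³ √q ≪ N |A + A| |A³ + A³|` as soon as `√q |A| ≫ N`. The hypothesis `N³ |A| ≤ q |A + A|⁴`
gives the result by itself when `|A|¹³ q⁵ ≪ N¹³`.
-/

lemma sum_comp_eq_sum_card_fiber_mul {α β : Type*} [Fintype β] [DecidableEq β] (s : Finset α)
    (f : α → β) (g : β → ℤ) :
    ∑ a ∈ s, g (f a) = ∑ z, (#{a ∈ s | f a = z} : ℤ) * g z := by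
  simp only [card_filter, Nat.cast_sum, sum_mul]
  rw [sum_comm]
  simp

lemma sum_card_fiber_sq_le {α β : Type*} [Fintype β] [DecidableEq β] (s : Finset α)
    (f : α → β) {k : ℕ} (hf : ∀ z, #{a ∈ s | f a = z} ≤ k) :
    ∑ z, #{a ∈ s | f a = z} ^ 2 ≤ k * #s := by
  calc ∑ z, #{a ∈ s | f a = z} ^ 2 ≤ ∑ z, k * #{a ∈ s | f a = z} := by
        simp only [sq]
        gcongr with z
        exact hf z
    _ = k * #s := by rw [← mul_sum, ← card_eq_sum_card_fiberwise (by simp)]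

lemma sq_sum_sub_mean_le {X : Type*} [Fintype X] (Q : Finset X) (n : X → ℝ) :
    (∑ p ∈ Q, n p - #Q * ((∑ p, n p) / Fintype.card X)) ^ 2 ≤
      #Q * (∑ p, n p ^ 2 - (∑ p, n p) ^ 2 / Fintype.card X) := by
  obtain hX | hX := isEmpty_or_nonempty X
  · simp [Q.eq_empty_of_isEmpty]
  have hcard : (Fintype.card X : ℝ) ≠ 0 := by simp
  set μ := (∑ p, n p) / Fintype.card X with hμ
  calc (∑ p ∈ Q, n p - #Q * μ) ^ 2 = (∑ p ∈ Q, (n p - μ)) ^ 2 := by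
        rw [sum_sub_distrib, sum_const, nsmul_eq_mul]
    _ ≤ #Q * ∑ p ∈ Q, (n p - μ) ^ 2 := sq_sum_le_card_mul_sum_sq
    _ ≤ #Q * ∑ p, (n p - μ) ^ 2 := by
        gcongr
        exact Q.subset_univ
    _ = #Q * (∑ p, n p ^ 2 - (∑ p, n p) ^ 2 / Fintype.card X) := by
        simp only [sub_sq, sum_add_distrib, sum_sub_distrib, ← sum_mul, ← mul_sum, sum_const,
          nsmul_eq_mul, card_univ]
        rw [hμ]
        field_simp
        ring

section GraphIncidence

variable {ι X Y : Type*} [DecidableEq Y]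

/-- The number of indices `i ∈ s` for which the graph of `f i` passes through the point `p`.
Summed over a set of points, it counts incidences between these points and the graphs. -/
def graphIncidence (s : Finset ι) (f : ι → X → Y) (p : X × Y) : ℕ :=
  #{i ∈ s | f i p.1 = p.2}

lemma sum_graphIncidence (s : Finset ι) (f : ι → X → Y) (Q : Finset (X × Y)) :
    ∑ p ∈ Q, graphIncidence s f p = ∑ i ∈ s, #{p ∈ Q | f i p.1 = p.2} :=
  (sum_card_bipartiteAbove_eq_sum_card_bipartiteBelow
    fun (i : ι) (p : X × Y) ↦ f i p.1 = p.2).symm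

variable [Fintype X] [Fintype Y]

lemma card_filter_mem_graph_inter_graph (f g : X → Y) :
    #{p : X × Y | f p.1 = p.2 ∧ g p.1 = p.2} = #{x | f x = g x} := by
  refine card_nbij' Prod.fst (fun x ↦ (x, f x)) ?_ ?_ ?_ ?_
  · rintro ⟨x, y⟩ h
    simp_all
  · intro x h
    simp_all
  · rintro ⟨x, y⟩ h
    simp_all
  · intro x _
    rfl

lemma sum_graphIncidence_univ (s : Finset ι) (f : ι → X → Y) :
    ∑ p, graphIncidence s f p = Fintype.card X * #s := by
  have card_graph (i : ι) : #{p : X × Y | f i p.1 = p.2} = Fintype.card X := by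
    simpa using card_filter_mem_graph_inter_graph (f i) (f i)
  simp only [sum_graphIncidence, card_graph, sum_const, smul_eq_mul, mul_comm]

lemma sum_graphIncidence_sq (s : Finset ι) (f : ι → X → Y) :
    ∑ p, graphIncidence s f p ^ 2 = ∑ i ∈ s, ∑ j ∈ s, #{x | f i x = f j x} := by
  calc ∑ p, graphIncidence s f p ^ 2
      = ∑ p : X × Y, #{ij ∈ s ×ˢ s | f ij.1 p.1 = p.2 ∧ f ij.2 p.1 = p.2} := by
        refine sum_congr rfl fun p _ ↦ ?_
        rw [graphIncidence, sq, ← card_product,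
          filter_product (fun i ↦ f i p.1 = p.2) (fun j ↦ f j p.1 = p.2)]
    _ = ∑ ij ∈ s ×ˢ s, #{p : X × Y | f ij.1 p.1 = p.2 ∧ f ij.2 p.1 = p.2} :=
        (sum_card_bipartiteAbove_eq_sum_card_bipartiteBelow
          fun (ij : ι × ι) (p : X × Y) ↦ f ij.1 p.1 = p.2 ∧ f ij.2 p.1 = p.2).symm
    _ = ∑ i ∈ s, ∑ j ∈ s, #{x | f i x = f j x} := by
        simp only [card_filter_mem_graph_inter_graph, sum_product]

lemma sq_sum_graphIncidence_sub_le (s : Finset ι) (f : ι → X → Y) (Q : Finset (X × Y)) :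
    (∑ p ∈ Q, (graphIncidence s f p : ℝ) - #Q * (#s / Fintype.card Y)) ^ 2 ≤
      #Q * (∑ i ∈ s, ∑ j ∈ s, (#{x | f i x = f j x} : ℝ) -
        Fintype.card X * #s ^ 2 / Fintype.card Y) := by
  obtain hX | hX := isEmpty_or_nonempty X
  · simp [Q.eq_empty_of_isEmpty]
  have hcard : (Fintype.card X : ℝ) ≠ 0 := by simp
  have sum_eq : ∑ p, (graphIncidence s f p : ℝ) = Fintype.card X * #s :=
    mod_cast sum_graphIncidence_univ s f
  have sum_sq_eq : ∑ p, (graphIncidence s f p : ℝ) ^ 2 =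
      ∑ i ∈ s, ∑ j ∈ s, (#{x | f i x = f j x} : ℝ) := mod_cast sum_graphIncidence_sq s f
  have h := sq_sum_sub_mean_le Q fun p ↦ (graphIncidence s f p : ℝ)
  rw [sum_eq, sum_sq_eq, Fintype.card_prod, Nat.cast_mul, mul_div_mul_left _ _ hcard] at h
  convert h using 3
  field_simp

lemma mul_card_le_two_mul_card_or_sq_le (s : Finset ι) (f : ι → X → Y) (Q : Finset (X × Y))
    {t : ℝ} (ht : 0 ≤ t) (hQ : t * #s ≤ ∑ p ∈ Q, (graphIncidence s f p : ℝ)) :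
    t * Fintype.card Y ≤ 2 * #Q ∨
      (t * #s) ^ 2 ≤ 4 * (#Q * (∑ i ∈ s, ∑ j ∈ s, (#{x | f i x = f j x} : ℝ) -
        Fintype.card X * #s ^ 2 / Fintype.card Y)) := by
  refine or_iff_not_imp_left.mpr fun h ↦ ?_
  rw [not_le] at h
  have hY : (0 : ℝ) < Fintype.card Y :=
    pos_of_mul_pos_right ((by positivity : (0 : ℝ) ≤ 2 * #Q).trans_lt h) ht
  have expected_le : #Q * (#s / Fintype.card Y : ℝ) ≤ t * #s / 2 := by
    rw [mul_div_assoc', div_le_div_iff₀ hY two_pos]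
    nlinarith [(#s).cast_nonneg (α := ℝ)]
  have discrepancy := sq_sum_graphIncidence_sub_le s f Q
  have half_le : t * #s / 2 ≤ ∑ p ∈ Q, (graphIncidence s f p : ℝ) - #Q * (#s / Fintype.card Y) := by
    linarith
  have sq_half_le := pow_le_pow_left₀ (by positivity) half_le 2
  linarith

end GraphIncidence

section QuadraticChar

variable {K : Type*} [Field K] [Fintype K]

lemma sum_mulChar_mul_inv_add {D : Type*} [CommRing D] [IsDomain D] {χ : MulChar K D}
    (hχ : χ ≠ 1) {δ : K} (hδ : δ ≠ 0) : ∑ x, χ x * χ⁻¹ (x + δ) = -1 := by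
  have χ_δ : χ δ * χ⁻¹ δ = 1 := by
    rw [← MulChar.mul_apply, mul_inv_cancel, MulChar.one_apply hδ.isUnit]
  have χ_neg_one : χ (-1) * χ (-1) = 1 := by rw [← map_mul]; simp
  calc ∑ x, χ x * χ⁻¹ (x + δ) = ∑ y, χ (-δ * y) * χ⁻¹ (-δ * y + δ) :=
        (Equiv.sum_comp (Equiv.mulLeft₀ (-δ) (neg_ne_zero.mpr hδ)) _).symm
    _ = ∑ y, χ (-1) * (χ y * χ⁻¹ (1 - y)) := by
        refine sum_congr rfl fun y _ ↦ ?_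
        rw [show -δ * y = -1 * δ * y by ring, show -1 * δ * y + δ = δ * (1 - y) by ring]
        simp only [map_mul]
        linear_combination (χ (-1) * χ y * χ⁻¹ (1 - y)) * χ_δ
    _ = χ (-1) * jacobiSum χ χ⁻¹ := (mul_sum ..).symm
    _ = -1 := by rw [jacobiSum_nontrivial_inv hχ, mul_neg, χ_neg_one]

variable [DecidableEq K]

lemma sum_quadraticChar_sub_mul_quadraticChar_sub (hK : ringChar K ≠ 2) (w w' : K) :
    ∑ z, quadraticChar K (z - w) * quadraticChar K (z - w') =
      (if w = w' then (Fintype.card K : ℤ) else 0) - 1 := by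
  have shift := (Equiv.subRight w).sum_comp
    fun x ↦ quadraticChar K x * quadraticChar K (x + (w - w'))
  simp only [Equiv.subRight_apply, sub_add_sub_cancel] at shift
  rw [shift]
  split_ifs with h
  · have sq_eq (x : K) : quadraticChar K x * quadraticChar K x = 1 - if x = 0 then 1 else 0 := by
      split_ifs with hx
      · simp [hx]
      · rw [← sq, quadraticChar_sq_one hx, sub_zero]
    simp only [h, sub_self, add_zero, sq_eq]
    simp
  · have := sum_mulChar_mul_inv_add (quadraticChar_ne_one hK) (sub_ne_zero.mpr h)
    rw [(quadraticChar_isQuadratic K).inv] at this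
    simpa using this

lemma sum_sq_sum_mul_quadraticChar_sub (hK : ringChar K ≠ 2) (G : K → ℤ) :
    ∑ z, (∑ w, G w * quadraticChar K (z - w)) ^ 2 =
      Fintype.card K * ∑ w, G w ^ 2 - (∑ w, G w) ^ 2 := by
  calc ∑ z, (∑ w, G w * quadraticChar K (z - w)) ^ 2
      = ∑ w, ∑ w', G w * G w' *
          ∑ z, quadraticChar K (z - w) * quadraticChar K (z - w') := by
        simp only [sq, sum_mul_sum]
        rw [sum_comm]
        refine sum_congr rfl fun w _ ↦ ?_
        rw [sum_comm]
        refine sum_congr rfl fun w' _ ↦ ?_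
        rw [mul_sum]
        exact sum_congr rfl fun z _ ↦ mul_mul_mul_comm ..
    _ = ∑ w, ∑ w', ((if w = w' then (Fintype.card K : ℤ) * G w ^ 2 else 0) - G w * G w') := by
        refine sum_congr rfl fun w _ ↦ sum_congr rfl fun w' _ ↦ ?_
        rw [sum_quadraticChar_sub_mul_quadraticChar_sub hK]
        split_ifs with h
        · rw [h]
          ring
        · ring
    _ = Fintype.card K * ∑ w, G w ^ 2 - (∑ w, G w) ^ 2 := by
        simp only [sum_sub_distrib, sum_ite_eq, mem_univ, if_true, ← mul_sum, ← sum_mul, sq]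

lemma sq_sum_mul_mul_quadraticChar_sub_le (hK : ringChar K ≠ 2) (F G : K → ℤ) :
    (∑ z, ∑ w, F z * G w * quadraticChar K (z - w)) ^ 2 ≤
      Fintype.card K * (∑ z, F z ^ 2) * ∑ w, G w ^ 2 := by
  calc (∑ z, ∑ w, F z * G w * quadraticChar K (z - w)) ^ 2
      = (∑ z, F z * ∑ w, G w * quadraticChar K (z - w)) ^ 2 := by
        simp only [mul_sum, mul_assoc]
    _ ≤ (∑ z, F z ^ 2) * ∑ z, (∑ w, G w * quadraticChar K (z - w)) ^ 2 :=
        sum_mul_sq_le_sq_mul_sq ..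
    _ ≤ (∑ z, F z ^ 2) * (Fintype.card K * ∑ w, G w ^ 2) := by
        rw [sum_sq_sum_mul_quadraticChar_sub hK]
        gcongr
        exact sub_le_self _ (sq_nonneg _)
    _ = Fintype.card K * (∑ z, F z ^ 2) * ∑ w, G w ^ 2 := by ring

lemma sq_sum_quadraticChar_sub_le (hK : ringChar K ≠ 2) {α β : Type*} {s : Finset α}
    {t : Finset β} {f : α → K} {g : β → K} {k l : ℕ} (hf : ∀ z, #{a ∈ s | f a = z} ≤ k)
    (hg : ∀ z, #{b ∈ t | g b = z} ≤ l) :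
    (∑ a ∈ s, ∑ b ∈ t, quadraticChar K (f a - g b)) ^ 2 ≤
      Fintype.card K * (k * #s) * (l * #t) := by
  have sum_eq : ∑ a ∈ s, ∑ b ∈ t, quadraticChar K (f a - g b) =
      ∑ z, ∑ w, (#{a ∈ s | f a = z} : ℤ) * #{b ∈ t | g b = w} * quadraticChar K (z - w) := by
    rw [sum_comp_eq_sum_card_fiber_mul s f fun z ↦ ∑ b ∈ t, quadraticChar K (z - g b)]
    refine sum_congr rfl fun z _ ↦ ?_
    rw [sum_comp_eq_sum_card_fiber_mul t g fun w ↦ quadraticChar K (z - w), mul_sum]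
    simp only [mul_assoc]
  rw [sum_eq]
  refine (sq_sum_mul_mul_quadraticChar_sub_le hK _ _).trans ?_
  gcongr
  · exact_mod_cast sum_card_fiber_sq_le s f hf
  · exact_mod_cast sum_card_fiber_sq_le t g hg

end QuadraticChar

lemma card_filter_pow_eq_le {D : Type*} [CommRing D] [IsDomain D] [Fintype D] [DecidableEq D]
    {n : ℕ} (hn : 0 < n) (a : D) : #{z : D | z ^ n = a} ≤ n := by
  have subset_nthRoots : ({z : D | z ^ n = a} : Finset D) ⊆ (Polynomial.nthRoots n a).toFinset := by
    intro z hz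
    simpa [Polynomial.mem_nthRoots hn] using hz
  exact (card_le_card subset_nthRoots).trans <|
    (Multiset.toFinset_card_le _).trans (Polynomial.card_nthRoots n a)

section ResidueField

variable {R : Type*} [CommRing R] [IsLocalRing R]

lemma residue_injOn_pow_eq {n : ℕ} (hn : IsUnit (n : R)) (v : R) :
    Set.InjOn (residue R) {u | IsUnit u ∧ u ^ n = v} := by
  rintro c ⟨hc, hcv⟩ d ⟨-, hdv⟩ hcd
  have isUnit_geomSum : IsUnit (∑ i ∈ range n, c ^ i * d ^ (n - 1 - i)) := by
    rw [← residue_ne_zero_iff_isUnit] at hc hn ⊢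
    rw [map_natCast] at hn
    simp only [map_sum, map_mul, map_pow, ← hcd, geom_sum₂_self]
    exact mul_ne_zero hn (pow_ne_zero _ hc)
  have geomSum_mul_sub : (∑ i ∈ range n, c ^ i * d ^ (n - 1 - i)) * (c - d) = 0 := by
    rw [geom_sum₂_mul, hcv, hdv, sub_self]
  exact sub_eq_zero.mp (isUnit_geomSum.mul_right_eq_zero.mp geomSum_mul_sub)

lemma ringChar_residueField_ne_two (h2 : IsUnit (2 : R)) : ringChar (ResidueField R) ≠ 2 := by
  intro h
  have cast_eq_zero := ringChar.Nat.cast_ringChar (R := ResidueField R)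
  rw [h, Nat.cast_ofNat, ← map_ofNat (residue R)] at cast_eq_zero
  exact (residue_ne_zero_iff_isUnit 2).mpr h2 cast_eq_zero

lemma card_eq_card_maximalIdeal_mul_card_residueField :
    Nat.card R = Nat.card (maximalIdeal R) * Nat.card (ResidueField R) :=
  (maximalIdeal R).card_eq_card_quotient_mul_card

variable [DecidableEq (ResidueField R)]

lemma card_filter_residue_eq [Fintype R] (z : ResidueField R) :
    #{x | residue R x = z} = Nat.card (maximalIdeal R) := by
  calc #{x | residue R x = z} = #{x | residue R x = 0} :=
        AddMonoidHom.card_fiber_eq_of_mem_range (residue R : R →+ ResidueField R)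
          (residue_surjective z) (residue_surjective 0)
    _ = Nat.card (maximalIdeal R) := by
        rw [← Nat.subtype_card _ fun x ↦ by rw [mem_filter_univ, residue_eq_zero_iff]]

lemma card_filter_residue_eq_le [Finite R] (s : Finset R) (z : ResidueField R) :
    #{x ∈ s | residue R x = z} ≤ Nat.card (maximalIdeal R) := by
  have := Fintype.ofFinite R
  rw [← card_filter_residue_eq z]
  exact card_le_card (filter_subset_filter _ (subset_univ _))

lemma card_filter_residue_mul_sub_eq_zero_le [Fintype R] {u : R} (hu : IsUnit u) (v : R) :
    #{x | residue R (u * x - v) = 0} ≤ Nat.card (maximalIdeal R) := by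
  rw [← card_filter_residue_eq 0]
  refine card_le_card_of_injOn (fun x ↦ u * x - v) (fun x hx ↦ ?_) ?_
  · rwa [mem_coe, mem_filter_univ] at hx ⊢
  · exact fun x _ y _ hxy ↦ hu.mul_left_cancel (sub_left_injective hxy)

lemma card_le_two_mul_card_filter_residue_ne_zero [Finite R] {A : Finset R}
    (hA : 2 * Nat.card (maximalIdeal R) ≤ #A) : #A ≤ 2 * #{x ∈ A | residue R x ≠ 0} := by
  have nonunits_le := card_filter_residue_eq_le A 0
  have := card_filter_add_card_filter_not (s := A) fun x ↦ residue R x = 0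
  lia

lemma card_filter_mul_residue_pow_add_eq_le [Finite R] (s : Finset R) {n : ℕ} (hn : 0 < n)
    {l : ResidueField R} (hl : l ≠ 0) (m z : ResidueField R) :
    #{c ∈ s | l * residue R c ^ n + m = z} ≤ Nat.card (maximalIdeal R) * n := by
  have := Finite.of_surjective _ (residue_surjective (R := R))
  have := Fintype.ofFinite (ResidueField R)
  calc #{c ∈ s | l * residue R c ^ n + m = z}
      ≤ Nat.card (maximalIdeal R) * #{w : ResidueField R | w ^ n = (z - m) / l} := by
        refine card_le_mul_card_image_of_maps_to (f := residue R) ?_ _ fun w _ ↦ ?_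
        · intro c hc
          rw [mem_filter] at hc
          rw [mem_filter_univ, eq_div_iff hl, ← hc.2]
          ring
        · exact (card_le_card (filter_subset_filter _ (filter_subset _ _))).trans
            (card_filter_residue_eq_le s w)
    _ ≤ Nat.card (maximalIdeal R) * n := by
        gcongr
        exact card_filter_pow_eq_le hn _

variable [Fintype (ResidueField R)]

lemma card_filter_pow_eq_le_card_residueField [DecidableEq R] {s : Finset R}
    (hs : ∀ u ∈ s, IsUnit u) {n : ℕ} (hn : IsUnit (n : R)) (v : R) :
    #{u ∈ s | u ^ n = v} ≤ #{z : ResidueField R | z ^ n = residue R v} := by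
  refine card_le_card_of_injOn (residue R) ?_ ?_
  · intro u hu
    rw [mem_coe, mem_filter] at hu
    rw [mem_coe, mem_filter_univ, ← map_pow, hu.2]
  · refine (residue_injOn_pow_eq hn v).mono fun u hu ↦ ?_
    rw [mem_coe, mem_filter] at hu
    exact ⟨hs u hu.1, hu.2⟩

lemma card_filter_sq_eq_le_quadraticChar [DecidableEq R] (h2 : IsUnit (2 : R)) {s : Finset R}
    (hs : ∀ u ∈ s, IsUnit u) (v : R) :
    (#{u ∈ s | u ^ 2 = v} : ℤ) ≤ 1 + quadraticChar (ResidueField R) (residue R v) := by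
  have card_sqrts := quadraticChar_card_sqrts (ringChar_residueField_ne_two h2) (residue R v)
  rw [Set.toFinset_ofPred] at card_sqrts
  rw [add_comm, ← card_sqrts, Nat.cast_le]
  exact card_filter_pow_eq_le_card_residueField hs (mod_cast h2) v

lemma sum_quadraticChar_residue_pow_sub_le [Finite R] (h2 : IsUnit (2 : R)) {l : R}
    (hl : IsUnit l) (m : R) {n : ℕ} (hn : 0 < n) (C : Finset R) :
    (∑ c ∈ C, ∑ c' ∈ C, quadraticChar (ResidueField R)
        (residue R (l * c' ^ n - (l * c ^ n + m))) : ℝ) ≤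
      √(Fintype.card (ResidueField R)) * (n * Nat.card (maximalIdeal R) * #C) := by
  have hl' : residue R l ≠ 0 := (residue_ne_zero_iff_isUnit l).mpr hl
  have sq_sum_le := sq_sum_quadraticChar_sub_le (ringChar_residueField_ne_two h2) (s := C) (t := C)
    (f := fun c' ↦ residue R l * residue R c' ^ n + 0)
    (g := fun c ↦ residue R l * residue R c ^ n + residue R m)
    (card_filter_mul_residue_pow_add_eq_le C hn hl' _)
    (card_filter_mul_residue_pow_add_eq_le C hn hl' _)
  simp only [add_zero, ← map_pow, ← map_mul, ← map_add, ← map_sub] at sq_sum_le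
  rw [sum_comm] at sq_sum_le
  refine (le_abs_self _).trans (abs_le_of_sq_le_sq ?_ (by positivity))
  rw [mul_pow, Real.sq_sqrt (Nat.cast_nonneg _)]
  calc _ ≤ (Fintype.card (ResidueField R) : ℝ) * ((Nat.card (maximalIdeal R) * n : ℕ) * #C) *
        ((Nat.card (maximalIdeal R) * n : ℕ) * #C) := mod_cast sq_sum_le
    _ = _ := by
        push_cast
        ring

end ResidueField

section ShiftedCube

variable {R : Type*} [CommRing R]

/-- The cubic `x ↦ (x - b)³ + c³` attached to `p = (b, c)`, whose graph contains the points
`(a + b, a³ + c³)`. -/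
def shiftedCube (p : R × R) (x : R) : R :=
  (x - p.1) ^ 3 + p.2 ^ 3

-- Completing the square: the difference of the two cubics is quadratic in `x`.
lemma sq_eq_of_shiftedCube_eq {b b' c c' x : R}
    (h : shiftedCube (b, c) x = shiftedCube (b', c') x) :
    (3 * (b' - b) * (2 * x - (b + b'))) ^ 2 =
      12 * (b' - b) * c' ^ 3 - (12 * (b' - b) * c ^ 3 + 3 * (b' - b) ^ 4) := by
  simp only [shiftedCube] at h
  linear_combination 12 * (b' - b) * h

variable [DecidableEq R]

lemma card_mul_card_mul_card_le_sum_graphIncidence (A B C : Finset R) :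
    #A * #(B ×ˢ C) ≤
      ∑ p ∈ (A + B) ×ˢ (A.image (fun x ↦ x ^ 3) + C.image (fun x ↦ x ^ 3)),
        graphIncidence (B ×ˢ C) shiftedCube p := by
  rw [sum_graphIncidence, mul_comm, ← smul_eq_mul]
  refine card_nsmul_le_sum _ _ _ ?_
  rintro ⟨b, c⟩ hbc
  rw [mem_product] at hbc
  refine card_le_card_of_injOn (fun a ↦ (a + b, a ^ 3 + c ^ 3)) ?_ ?_
  · intro a ha
    rw [mem_coe, mem_filter, mem_product]
    exact ⟨⟨add_mem_add ha hbc.1,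
      add_mem_add (mem_image_of_mem _ ha) (mem_image_of_mem _ hbc.2)⟩, by simp [shiftedCube]⟩
  · intro a _ a' _ h
    exact add_right_cancel (congrArg Prod.fst h)

variable [IsLocalRing R]

lemma sum_card_shiftedCube_eq_le [Finite (ResidueField R)] (h3 : IsUnit (3 : R)) {C : Finset R}
    (hC : ∀ c ∈ C, IsUnit c) (X : Finset R) (b b' : R) :
    ∑ c ∈ C, ∑ c' ∈ C, #{x ∈ X | shiftedCube (b, c) x = shiftedCube (b', c') x} ≤
      3 * #X * #C := by
  classical
  have := Fintype.ofFinite (ResidueField R)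
  have card_cubeRoots_le (v : R) : #{c' ∈ C | c' ^ 3 = v} ≤ 3 :=
    (card_filter_pow_eq_le_card_residueField hC (mod_cast h3) v).trans
      (card_filter_pow_eq_le three_pos _)
  rw [mul_comm, ← smul_eq_mul]
  refine sum_le_card_nsmul _ _ _ fun c _ ↦ ?_
  refine (sum_card_bipartiteAbove_eq_sum_card_bipartiteBelow
    fun c' x ↦ shiftedCube (b, c) x = shiftedCube (b', c') x).trans_le ?_
  rw [mul_comm, ← smul_eq_mul]
  refine sum_le_card_nsmul _ _ _ fun x _ ↦ ?_
  refine (card_le_card ?_).trans (card_cubeRoots_le (shiftedCube (b, c) x - (x - b') ^ 3))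
  intro c' hc'
  rw [bipartiteBelow, mem_filter] at hc'
  rw [mem_filter, hc'.2, shiftedCube, add_sub_cancel_left]
  exact ⟨hc'.1, rfl⟩

variable [Fintype R] [Fintype (ResidueField R)]

lemma card_noncritical_shiftedCube_eq_le [DecidableEq (ResidueField R)] (h2 : IsUnit (2 : R))
    (h3 : IsUnit (3 : R)) {b b' : R} (hb : IsUnit (b' - b)) (c c' : R) :
    (#{x | shiftedCube (b, c) x = shiftedCube (b', c') x ∧
        residue R (2 * x - (b + b')) ≠ 0} : ℤ) ≤
      1 + quadraticChar (ResidueField R) (residue R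
        (12 * (b' - b) * c' ^ 3 - (12 * (b' - b) * c ^ 3 + 3 * (b' - b) ^ 4))) := by
  refine le_trans (Nat.cast_le.mpr ?_) <| card_filter_sq_eq_le_quadraticChar h2
    (s := {u : R | residue R u ≠ 0}) (by simp) _
  refine card_le_card_of_injOn (fun x ↦ 3 * (b' - b) * (2 * x - (b + b'))) ?_ ?_
  · intro x hx
    rw [mem_coe, mem_filter_univ, residue_ne_zero_iff_isUnit] at hx
    rw [mem_coe, mem_filter, mem_filter_univ, residue_ne_zero_iff_isUnit]
    exact ⟨(h3.mul hb).mul hx.2, sq_eq_of_shiftedCube_eq hx.1⟩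
  · intro x _ y _ hxy
    exact h2.mul_left_cancel <| sub_left_injective <| (h3.mul hb).mul_left_cancel hxy

lemma sum_card_shiftedCube_eq_le_of_isUnit_sub (h2 : IsUnit (2 : R)) (h3 : IsUnit (3 : R))
    {C : Finset R} (hC : ∀ c ∈ C, IsUnit c) {b b' : R} (hb : IsUnit (b' - b)) :
    (∑ c ∈ C, ∑ c' ∈ C, #{x | shiftedCube (b, c) x = shiftedCube (b', c') x} : ℝ) ≤
      #C ^ 2 +
        (√(Fintype.card (ResidueField R)) + 1) * (3 * Nat.card (maximalIdeal R) * #C) := by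
  classical
  let D (c c' : R) : R := 12 * (b' - b) * c' ^ 3 - (12 * (b' - b) * c ^ 3 + 3 * (b' - b) ^ 4)
  have card_le (c c' : R) : (#{x | shiftedCube (b, c) x = shiftedCube (b', c') x} : ℝ) ≤
      1 + (quadraticChar (ResidueField R) (residue R (D c c')) : ℝ) +
        #{x ∈ ({x | residue R (2 * x - (b + b')) = 0} : Finset R) |
          shiftedCube (b, c) x = shiftedCube (b', c') x} := by
    have noncritical := card_noncritical_shiftedCube_eq_le h2 h3 hb c c'
    rw [← card_filter_add_card_filter_not (fun x ↦ residue R (2 * x - (b + b')) = 0),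
      filter_comm, add_comm, filter_filter]
    push_cast
    gcongr
    exact_mod_cast noncritical
  have noncritical_sum_le : (∑ c ∈ C, ∑ c' ∈ C,
      quadraticChar (ResidueField R) (residue R (D c c')) : ℝ) ≤
        √(Fintype.card (ResidueField R)) * (3 * Nat.card (maximalIdeal R) * #C) := by
    refine sum_quadraticChar_residue_pow_sub_le h2 (l := 12 * (b' - b)) ?_ _ three_pos C
    rw [show (12 : R) = 2 * 2 * 3 by norm_num]
    exact ((h2.mul h2).mul h3).mul hb
  have critical_sum_le : (∑ c ∈ C, ∑ c' ∈ C,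
      #{x ∈ ({x | residue R (2 * x - (b + b')) = 0} : Finset R) |
        shiftedCube (b, c) x = shiftedCube (b', c') x} : ℝ) ≤
          3 * Nat.card (maximalIdeal R) * #C := by
    have sum_le := sum_card_shiftedCube_eq_le h3 hC {x | residue R (2 * x - (b + b')) = 0} b b'
    refine (mod_cast sum_le : _ ≤ ((3 * _ * _ : ℕ) : ℝ)).trans ?_
    push_cast
    gcongr
    exact card_filter_residue_mul_sub_eq_zero_le h2 (b + b')
  refine (sum_le_sum fun c _ ↦ sum_le_sum fun c' _ ↦ card_le c c').trans ?_
  simp only [sum_add_distrib, sum_const, nsmul_eq_mul, mul_one]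
  linarith

lemma sum_sum_card_shiftedCube_eq_le (h2 : IsUnit (2 : R)) (h3 : IsUnit (3 : R)) (B : Finset R)
    {C : Finset R} (hC : ∀ c ∈ C, IsUnit c) :
    (∑ p ∈ B ×ˢ C, ∑ p' ∈ B ×ˢ C, #{x | shiftedCube p x = shiftedCube p' x} : ℝ) ≤
      #B ^ 2 * (#C ^ 2 +
        (√(Fintype.card (ResidueField R)) + 1) * (3 * Nat.card (maximalIdeal R) * #C)) +
      #B * (Nat.card (maximalIdeal R) * (3 * Fintype.card R * #C)) := by
  classical
  set L := Nat.card (maximalIdeal R)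
  set K : ℝ := #C ^ 2 + (√(Fintype.card (ResidueField R)) + 1) * (3 * L * #C)
  have pair_le (b b' : R) :
      (∑ c ∈ C, ∑ c' ∈ C, #{x | shiftedCube (b, c) x = shiftedCube (b', c') x} : ℝ) ≤
        K + if residue R b' = residue R b then (3 * Fintype.card R * #C : ℝ) else 0 := by
    split_ifs with h
    · refine le_add_of_nonneg_of_le (by positivity) ?_
      exact_mod_cast sum_card_shiftedCube_eq_le h3 hC univ b b'
    · rw [add_zero]
      refine sum_card_shiftedCube_eq_le_of_isUnit_sub h2 h3 hC ?_
      rwa [← residue_ne_zero_iff_isUnit, map_sub, sub_ne_zero]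
  have row_le (b : R) :
      ∑ b' ∈ B, (K + if residue R b' = residue R b then (3 * Fintype.card R * #C : ℝ) else 0) ≤
        #B * K + L * (3 * Fintype.card R * #C) := by
    rw [sum_add_distrib, sum_const, nsmul_eq_mul, ← sum_filter, sum_const, nsmul_eq_mul]
    gcongr
    exact card_filter_residue_eq_le B _
  calc (∑ p ∈ B ×ˢ C, ∑ p' ∈ B ×ˢ C, #{x | shiftedCube p x = shiftedCube p' x} : ℝ)
      = ∑ b ∈ B, ∑ b' ∈ B, ∑ c ∈ C, ∑ c' ∈ C,
          (#{x | shiftedCube (b, c) x = shiftedCube (b', c') x} : ℝ) := by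
        simp only [sum_product]
        exact sum_congr rfl fun b _ ↦ sum_comm
    _ ≤ ∑ b ∈ B, (#B * K + L * (3 * Fintype.card R * #C)) :=
        sum_le_sum fun b _ ↦ (sum_le_sum fun b' _ ↦ pair_le b b').trans (row_le b)
    _ = #B ^ 2 * K + #B * (L * (3 * Fintype.card R * #C)) := by
        rw [sum_const, nsmul_eq_mul]
        ring

end ShiftedCube

section CubeSumset

lemma card_eq_card_maximalIdeal_mul_sqrt_sq (R : Type*) [CommRing R] [Fintype R] [IsLocalRing R]
    [Fintype (ResidueField R)] :
    (Fintype.card R : ℝ) =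
      Nat.card (maximalIdeal R) * √(Fintype.card (ResidueField R)) ^ 2 := by
  rw [Real.sq_sqrt (Nat.cast_nonneg _), ← Nat.card_eq_fintype_card,
    card_eq_card_maximalIdeal_mul_card_residueField, Nat.cast_mul, ← Nat.card_eq_fintype_card]

variable {R : Type*} [CommRing R] [Fintype R] [IsLocalRing R] [Fintype (ResidueField R)]

lemma two_mul_card_maximalIdeal_le {a : ℝ}
    (hA : 2 * (Fintype.card R : ℝ) ≤ √(Fintype.card (ResidueField R)) * a) :
    2 * (Nat.card (maximalIdeal R) : ℝ) ≤ a := by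
  have one_le_sqrt : 1 ≤ √(Fintype.card (ResidueField R) : ℝ) :=
    Real.one_le_sqrt.mpr (mod_cast Fintype.card_pos)
  refine le_of_mul_le_mul_left (a := √(Fintype.card (ResidueField R))) ?_ (by positivity)
  calc √(Fintype.card (ResidueField R)) * (2 * Nat.card (maximalIdeal R))
      ≤ √(Fintype.card (ResidueField R)) ^ 2 * (2 * Nat.card (maximalIdeal R)) := by
        gcongr
        exact le_self_pow₀ one_le_sqrt two_ne_zero
    _ = 2 * (Fintype.card R : ℝ) := by
        rw [card_eq_card_maximalIdeal_mul_sqrt_sq R]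
        ring
    _ ≤ √(Fintype.card (ResidueField R)) * a := hA

variable [DecidableEq R]

lemma sum_sum_card_shiftedCube_eq_sub_le (h2 : IsUnit (2 : R)) (h3 : IsUnit (3 : R)) {A : Finset R}
    (hA : 2 * (Fintype.card R : ℝ) ≤ √(Fintype.card (ResidueField R)) * #A)
    {C : Finset R} (hC : ∀ c ∈ C, IsUnit c) :
    (∑ p ∈ A ×ˢ C, ∑ p' ∈ A ×ˢ C, #{x | shiftedCube p x = shiftedCube p' x} : ℝ) -
        #(A ×ˢ C) ^ 2 ≤
      8 * √(Fintype.card (ResidueField R)) * Nat.card (maximalIdeal R) * (#A * #(A ×ˢ C)) := by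
  have moment_le := sum_sum_card_shiftedCube_eq_le h2 h3 A hC
  have one_le_sqrt : 1 ≤ √(Fintype.card (ResidueField R) : ℝ) :=
    Real.one_le_sqrt.mpr (mod_cast Fintype.card_pos)
  rw [card_product, Nat.cast_mul]
  have critical_le := mul_le_mul_of_nonneg_left one_le_sqrt
    (by positivity : (0 : ℝ) ≤ #A ^ 2 * (3 * Nat.card (maximalIdeal R) * #C))
  have congruent_le := mul_le_mul_of_nonneg_left hA
    (by positivity : (0 : ℝ) ≤ #A * (Nat.card (maximalIdeal R) * (3 * #C)))
  have main_nonneg : (0 : ℝ) ≤ √(Fintype.card (ResidueField R)) * Nat.card (maximalIdeal R) *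
      (#A * (#A * #C)) := by positivity
  linarith

lemma card_mul_card_le_or_card_mul_card_mul_card_le (h2 : IsUnit (2 : R)) (h3 : IsUnit (3 : R))
    {A : Finset R} (hA : 2 * (Fintype.card R : ℝ) ≤ √(Fintype.card (ResidueField R)) * #A)
    {C : Finset R} (hC : ∀ c ∈ C, IsUnit c) {P : ℝ}
    (hP : #(A + A) * #(A.image (fun x ↦ x ^ 3) + C.image (fun x ↦ x ^ 3)) ≤ P) :
    #A * Fintype.card R ≤ 2 * P ∨
      #A * (#A * #C) ≤ 32 * P * √(Fintype.card (ResidueField R)) * Nat.card (maximalIdeal R) := by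
  have moment_le := sum_sum_card_shiftedCube_eq_sub_le h2 h3 hA hC
  set s := √(Fintype.card (ResidueField R) : ℝ)
  set L := Nat.card (maximalIdeal R)
  set Q := (A + A) ×ˢ (A.image (fun x ↦ x ^ 3) + C.image (fun x ↦ x ^ 3)) with hQ
  have card_Q_le : (#Q : ℝ) ≤ P := by rwa [hQ, card_product, Nat.cast_mul]
  refine (mul_card_le_two_mul_card_or_sq_le (A ×ˢ C) shiftedCube Q (Nat.cast_nonneg #A)
    (mod_cast card_mul_card_mul_card_le_sum_graphIncidence A A C)).imp
    (fun few_points ↦ by linarith) fun sq_le ↦ ?_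
  rw [mul_div_cancel_left₀ _ (by simp)] at sq_le
  have sq_le_mul : (#A * (#A * #C) : ℝ) ^ 2 ≤ 32 * P * s * L * (#A * (#A * #C)) := by
    rw [card_product, Nat.cast_mul] at sq_le moment_le
    calc (#A * (#A * #C) : ℝ) ^ 2 ≤ 4 * (#Q * (8 * s * L * (#A * (#A * #C)))) :=
          sq_le.trans (by gcongr)
      _ ≤ 4 * (P * (8 * s * L * (#A * (#A * #C)))) := by gcongr
      _ = 32 * P * s * L * (#A * (#A * #C)) := by ring
  have P_nonneg : 0 ≤ P := (Nat.cast_nonneg _).trans card_Q_le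
  by_contra! hlt
  nlinarith [(by positivity : 0 ≤ 32 * P * s * L)]

lemma card_mul_card_le_or_card_pow_three_mul_sqrt_le (h2 : IsUnit (2 : R)) (h3 : IsUnit (3 : R))
    {A : Finset R} (hA : 2 * (Fintype.card R : ℝ) ≤ √(Fintype.card (ResidueField R)) * #A)
    {P : ℝ} (hP : #(A + A) * #(A.image (fun x ↦ x ^ 3) + A.image (fun x ↦ x ^ 3)) ≤ P) :
    #A * Fintype.card R ≤ 2 * P ∨
      #A ^ 3 * √(Fintype.card (ResidueField R)) ≤ 64 * Fintype.card R * P := by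
  classical
  set s := √(Fintype.card (ResidueField R) : ℝ)
  set L := Nat.card (maximalIdeal R)
  set C := {x ∈ A | residue R x ≠ 0} with hC
  have isUnit_of_mem (c : R) (hc : c ∈ C) : IsUnit c := by
    rw [hC, mem_filter, residue_ne_zero_iff_isUnit] at hc
    exact hc.2
  have two_mul_le : 2 * L ≤ #A := mod_cast two_mul_card_maximalIdeal_le hA
  have card_le : (#A : ℝ) ≤ 2 * #C :=
    mod_cast card_le_two_mul_card_filter_residue_ne_zero two_mul_le
  have card_mul_card_le :
      (#(A + A) * #(A.image (fun x ↦ x ^ 3) + C.image (fun x ↦ x ^ 3)) : ℝ) ≤ P := by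
    refine le_trans ?_ hP
    gcongr
    exact filter_subset _ _
  refine (card_mul_card_le_or_card_mul_card_mul_card_le h2 h3 hA isUnit_of_mem
    card_mul_card_le).imp_right fun h ↦ ?_
  calc #A ^ 3 * s ≤ #A * (#A * (2 * #C)) * s := by
        rw [pow_three]
        gcongr
    _ = 2 * (#A * (#A * #C)) * s := by ring
    _ ≤ 2 * (32 * P * s * L) * s := by gcongr 2 * ?_ * s
    _ = 64 * Fintype.card R * P := by
        rw [card_eq_card_maximalIdeal_mul_sqrt_sq R]
        ring

end CubeSumset

lemma two_mul_le_sqrt_mul_of_pow_le {N a q : ℝ} (ha : 0 ≤ a) (hq : 1 ≤ q)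
    (h : (2 * N) ^ 13 ≤ a ^ 13 * q ^ 5) : 2 * N ≤ √q * a := by
  refine le_of_pow_le_pow_left₀ (n := 13) (by norm_num) (by positivity) (h.trans ?_)
  calc a ^ 13 * q ^ 5 = a ^ 13 * √q ^ 10 := by rw [pow_mul √q 2 5, Real.sq_sqrt (by positivity)]
    _ ≤ a ^ 13 * √q ^ 13 := by
        gcongr ?_ * ?_
        exact pow_le_pow_right₀ (Real.one_le_sqrt.mpr hq) (by norm_num)
    _ = (√q * a) ^ 13 := by ring

lemma sq_mul_pow_le_of_le_or_le {N a q M : ℝ} (hN : 0 < N) (ha : 0 ≤ a) (haN : a ≤ N) (hq : 0 ≤ q)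
    (hlarge : (2 * N) ^ 13 ≤ a ^ 13 * q ^ 5)
    (h : a * N ≤ 2 * M ^ 2 ∨ a ^ 3 * √q ≤ 64 * N * M ^ 2) :
    N ^ 2 * a ^ 18 ≤ 2 ^ 60 * M ^ 20 := by
  obtain h | h := h
  · calc N ^ 2 * a ^ 18 = N ^ 2 * a ^ 10 * a ^ 8 := by ring
      _ ≤ N ^ 2 * a ^ 10 * N ^ 8 := by gcongr
      _ = (a * N) ^ 10 := by ring
      _ ≤ (2 * M ^ 2) ^ 10 := by gcongr
      _ ≤ 2 ^ 60 * M ^ 20 := by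
        have : 0 ≤ M ^ 20 := by positivity
        ring_nf
        gcongr
        norm_num
  · have pow_le : N ^ 12 ≤ a ^ 12 * q ^ 5 := by
      refine le_of_mul_le_mul_right (a := N) ?_ hN
      calc N ^ 12 * N ≤ (2 * N) ^ 13 := by
            rw [← pow_succ]
            gcongr
            linarith
        _ ≤ a ^ 12 * q ^ 5 * a := hlarge.trans_eq (by ring)
        _ ≤ a ^ 12 * q ^ 5 * N := by gcongr
    refine le_of_mul_le_mul_right (a := N ^ 10) ?_ (by positivity)
    calc N ^ 2 * a ^ 18 * N ^ 10 = N ^ 12 * a ^ 18 := by ring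
      _ ≤ a ^ 12 * q ^ 5 * a ^ 18 := by gcongr
      _ = a ^ 30 * (√q ^ 2) ^ 5 := by
        rw [Real.sq_sqrt hq]
        ring
      _ = (a ^ 3 * √q) ^ 10 := by ring
      _ ≤ (64 * N * M ^ 2) ^ 10 := by gcongr
      _ = 2 ^ 60 * M ^ 20 * N ^ 10 := by ring

lemma sq_mul_pow_le_of_pow_le {N a q M : ℝ} (hN : 0 < N) (ha : 0 ≤ a) (hq : 0 < q)
    (hsmall : a ^ 13 * q ^ 5 ≤ (2 * N) ^ 13) (h : N ^ 3 * a ≤ q * M ^ 4) :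
    N ^ 2 * a ^ 18 ≤ 2 ^ 60 * M ^ 20 := by
  refine le_of_mul_le_mul_right (a := N ^ 13 * q ^ 5) ?_ (by positivity)
  calc N ^ 2 * a ^ 18 * (N ^ 13 * q ^ 5) = (N ^ 3 * a) ^ 5 * (a ^ 13 * q ^ 5) := by ring
    _ ≤ (q * M ^ 4) ^ 5 * (2 * N) ^ 13 := by gcongr
    _ = 2 ^ 13 * M ^ 20 * (N ^ 13 * q ^ 5) := by ring
    _ ≤ 2 ^ 60 * M ^ 20 * (N ^ 13 * q ^ 5) := by
        gcongr <;> norm_num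

lemma mul_rpow_mul_rpow_le_of_pow_le {q a M : ℝ} {r : ℕ} (hq : 0 ≤ q) (ha : 0 ≤ a) (hM : 0 ≤ M)
    (h : (q ^ r) ^ 2 * a ^ 18 ≤ 2 ^ 60 * M ^ 20) :
    1 / 8 * q ^ ((r : ℝ) / 10) * a ^ ((9 : ℝ) / 10) ≤ M := by
  have rpow_pow_q : (q ^ ((r : ℝ) / 10)) ^ 20 = (q ^ r) ^ 2 := by
    rw [← Real.rpow_mul_natCast hq, ← pow_mul, ← Real.rpow_natCast]
    congr 1
    push_cast
    ring
  have rpow_pow_a : (a ^ ((9 : ℝ) / 10)) ^ 20 = a ^ 18 := by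
    rw [← Real.rpow_mul_natCast ha, ← Real.rpow_natCast]
    norm_num
  refine le_of_pow_le_pow_left₀ (n := 20) (by norm_num) hM ?_
  rw [mul_pow, mul_pow, rpow_pow_q, rpow_pow_a]
  linarith

theorem stmt_3_general {R : Type*} [CommRing R] [Fintype R] [DecidableEq R] [IsLocalRing R]
    {q r : ℕ} (hq : Nat.card (ResidueField R) = q) (hcard : Fintype.card R = q ^ r)
    (h6 : IsUnit (6 : R)) {A : Finset R} (hA : q ^ (3 * r - 1) * #A ≤ #(A + A) ^ 4) :
    1 / 8 * (q : ℝ) ^ ((r : ℝ) / 10) * (#A : ℝ) ^ ((9 : ℝ) / 10) ≤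
      max (#(A + A) : ℝ) #(A.image (fun x ↦ x ^ 3) + A.image (fun x ↦ x ^ 3)) := by
  have : Finite (ResidueField R) := .of_surjective _ residue_surjective
  let _ : Fintype (ResidueField R) := .ofFinite _
  have h2 : IsUnit (2 : R) := isUnit_of_dvd_unit ⟨3, by norm_num⟩ h6
  have h3 : IsUnit (3 : R) := isUnit_of_dvd_unit ⟨2, by norm_num⟩ h6
  have q_pos : 0 < q := hq ▸ Nat.card_pos
  have r_ne_zero : r ≠ 0 := by
    rintro rfl
    exact Fintype.one_lt_card.ne' (hcard.trans (pow_zero q))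
  have cast_card : (Fintype.card R : ℝ) = (q : ℝ) ^ r := by rw [hcard, Nat.cast_pow]
  have card_le : (#A : ℝ) ≤ (q : ℝ) ^ r := cast_card ▸ mod_cast card_le_univ A
  refine mul_rpow_mul_rpow_le_of_pow_le (by positivity) (by positivity) (by positivity) ?_
  obtain hsmall | hlarge := le_total ((#A : ℝ) ^ 13 * q ^ 5) ((2 * q ^ r) ^ 13)
  · have doubling : ((q : ℝ) ^ r) ^ 3 * #A ≤ q * #(A + A) ^ 4 := by
      rw [← pow_mul, mul_comm r, ← Nat.sub_add_cancel (by lia : 1 ≤ 3 * r), pow_succ', mul_assoc]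
      gcongr
      exact_mod_cast hA
    refine sq_mul_pow_le_of_pow_le (by positivity) (by positivity) (mod_cast q_pos) hsmall
      (doubling.trans ?_)
    gcongr
    exact le_max_left _ _
  · refine sq_mul_pow_le_of_le_or_le (by positivity) (by positivity) card_le (by positivity)
      hlarge ?_
    have large := two_mul_le_sqrt_mul_of_pow_le (by positivity) (mod_cast q_pos) hlarge
    rw [← cast_card] at large ⊢
    rw [← hq, Nat.card_eq_fintype_card] at large ⊢
    refine card_mul_card_le_or_card_pow_three_mul_sqrt_le h2 h3 large ?_
    rw [sq]
    exact mul_le_mul (le_max_left _ _) (le_max_right _ _) (by positivity) (by positivity)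

/-- There is an absolute constant `c > 0` such that: for any finite
valuation ring `R` of order `q ^ r` in which `6` is a unit, and any nonempty `A ⊆ R`
with `|A+A|^4 ≥ q^(3r-1) * |A|`, one has
`max {|A+A|, |A³+A³|} ≥ c * q^(r/10) * |A|^(9/10)`. -/
theorem stmt_3 :
    ∃ c : ℝ, 0 < c ∧
      ∀ (R : Type) [CommRing R] [Fintype R] [DecidableEq R] [Nontrivial R]
        [IsLocalRing R] [IsPrincipalIdealRing R]
        (q r : ℕ),
        Nat.card (IsLocalRing.ResidueField R) = q →
        IsLocalRing.maximalIdeal R ^ r = ⊥ →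
        (∀ k < r, IsLocalRing.maximalIdeal R ^ k ≠ ⊥) →
        Fintype.card R = q ^ r →
        IsUnit (6 : R) →
        ∀ A : Finset R, A.Nonempty →
          q ^ (3 * r - 1) * A.card ≤ (A + A).card ^ 4 →
          c * (q : ℝ) ^ ((r : ℝ) / 10) * (A.card : ℝ) ^ ((9 : ℝ) / 10) ≤
            max (((A + A).card : ℝ))
              (((A.image (fun x => x ^ 3) + A.image (fun x => x ^ 3)).card : ℝ)) :=
  ⟨1 / 8, by norm_num, fun _ _ _ _ _ _ _ _ _ hq _ _ hcard h6 _ _ hA ↦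
    stmt_3_general hq hcard h6 hA⟩
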